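/- For every integer h ≥ 1, C(3h−1, h)·(1−(7/20)^h)^{C(2h−1,h−1)} ≤ (27/4)^h · exp(−(7/5)^h/(2(2h+1))). -/

import Mathlib

/-!
The two factors are bounded separately. The term of index `h` in the binomial expansion of
`(1 + 2) ^ (3 * h)` gives `C(3h, h) ≤ (27 / 4) ^ h`. For the other factor, `1 - x ≤ exp (-x)`
reduces the claim to a lower bound for the exponent `C(2h - 1, h - 1)`, which is half of the
largest of the `2h + 1` binomial coefficients `C(2h, i)`, whose sum is `4 ^ h`.
-/

theorem pow_mul_pow_mul_choose_le_add_pow {R : Type*} [CommSemiring R] [PartialOrder R]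
    [IsOrderedRing R] {x y : R} (hx : 0 ≤ x) (hy : 0 ≤ y) (i j : ℕ) :
    x ^ i * y ^ j * (i + j).choose i ≤ (x + y) ^ (i + j) := by
  have term_nonneg (m : ℕ) : 0 ≤ x ^ m * y ^ (i + j - m) * (i + j).choose m := by positivity
  have hi : i ∈ Finset.range (i + j + 1) := Finset.mem_range.2 (by lia)
  rw [add_pow]
  simpa only [Nat.add_sub_cancel_left] using
    Finset.single_le_sum (fun m _ ↦ term_nonneg m) hi

theorem pow_mul_pow_pow_mul_choose_le (a b n : ℕ) :
    (a ^ a * b ^ b) ^ n * ((a + b) * n).choose (a * n) ≤ ((a + b) ^ (a + b)) ^ n := by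
  calc (a ^ a * b ^ b) ^ n * ((a + b) * n).choose (a * n)
      = a ^ (a * n) * b ^ (b * n) * (a * n + b * n).choose (a * n) := by
        rw [mul_pow, ← pow_mul, ← pow_mul, add_mul]
    _ ≤ (a + b) ^ (a * n + b * n) :=
        pow_mul_pow_mul_choose_le_add_pow (Nat.zero_le a) (Nat.zero_le b) (a * n) (b * n)
    _ = ((a + b) ^ (a + b)) ^ n := by rw [← add_mul, pow_mul]

theorem choose_three_mul_self_le (n : ℕ) : ((3 * n).choose n : ℝ) ≤ (27 / 4) ^ n := by
  have h : 4 ^ n * (3 * n).choose n ≤ 27 ^ n := by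
    simpa using pow_mul_pow_pow_mul_choose_le 1 2 n
  rw [div_pow, le_div_iff₀' (by positivity)]
  exact_mod_cast h

theorem centralBinom_succ_eq_two_mul_choose (n : ℕ) :
    (n + 1).centralBinom = 2 * (2 * n + 1).choose n := by
  rw [Nat.centralBinom_eq_two_mul_choose, mul_add_one, Nat.choose_succ_succ',
    Nat.choose_symm_half, ← two_mul]

theorem four_pow_succ_le_mul_choose (n : ℕ) :
    4 ^ (n + 1) ≤ 2 * (2 * (n + 1) + 1) * (2 * n + 1).choose n := by
  calc 4 ^ (n + 1) ≤ (2 * (n + 1) + 1) * (n + 1).centralBinom :=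
        Nat.four_pow_le_two_mul_add_one_mul_central_binom (n + 1)
    _ = 2 * (2 * (n + 1) + 1) * (2 * n + 1).choose n := by
        rw [centralBinom_succ_eq_two_mul_choose]; ring

theorem one_sub_pow_le_exp_neg_mul {x : ℝ} (hx : x ≤ 1) (n : ℕ) :
    (1 - x) ^ n ≤ Real.exp (-(n * x)) := by
  calc (1 - x) ^ n ≤ Real.exp (-x) ^ n :=
        pow_le_pow_left₀ (sub_nonneg.2 hx) (Real.one_sub_le_exp_neg x) n
    _ = Real.exp (-(n * x)) := by rw [← Real.exp_nat_mul, mul_neg]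

theorem one_sub_pow_pow_choose_le_exp {q : ℝ} (hq₀ : 0 ≤ q) (hq₁ : q ≤ 1) (n : ℕ) :
    (1 - q ^ (n + 1)) ^ (2 * n + 1).choose n ≤
      Real.exp (-((4 * q) ^ (n + 1) / (2 * (2 * ((n + 1 : ℕ) : ℝ) + 1)))) := by
  refine (one_sub_pow_le_exp_neg_mul (pow_le_one₀ hq₀ hq₁) _).trans ?_
  gcongr
  have hchoose :
      (4 : ℝ) ^ (n + 1) ≤ 2 * (2 * ((n + 1 : ℕ) : ℝ) + 1) * (2 * n + 1).choose n := by
    exact_mod_cast four_pow_succ_le_mul_choose n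
  rw [div_le_iff₀' (by positivity), mul_pow, ← mul_assoc]
  gcongr

theorem stmt_15 (h : ℕ) (hh : 1 ≤ h) :
    ((3 * h - 1).choose h : ℝ) *
      (1 - ((7 : ℝ) / 20) ^ h) ^ ((2 * h - 1).choose (h - 1)) ≤
    ((27 : ℝ) / 4) ^ h *
      Real.exp (-(((7 : ℝ) / 5) ^ h / (2 * (2 * (h : ℝ) + 1)))) := by
  have hchoose : ((3 * h - 1).choose h : ℝ) ≤ (27 / 4) ^ h :=
    (Nat.cast_le.2 (Nat.choose_le_choose h (Nat.sub_le _ 1))).trans (choose_three_mul_self_le h)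
  have hexp : (1 - ((7 : ℝ) / 20) ^ h) ^ (2 * h - 1).choose (h - 1) ≤
      Real.exp (-((7 / 5) ^ h / (2 * (2 * (h : ℝ) + 1)))) := by
    obtain ⟨n, rfl⟩ := Nat.exists_eq_add_of_le' hh
    rw [show (7 / 5 : ℝ) = 4 * (7 / 20) by norm_num]
    exact one_sub_pow_pow_choose_le_exp (by norm_num) (by norm_num) n
  have hbase : 0 ≤ 1 - ((7 : ℝ) / 20) ^ h :=
    sub_nonneg.2 (pow_le_one₀ (by norm_num) (by norm_num))
  exact mul_le_mul hchoose hexp (pow_nonneg hbase _) (by positivity)
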